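/- Suppose a self-adjoint operator H on ℓ²(ℤ) has SULE, with complete orthonormal set of eigenfunctions {φ_s}, centers n_s, and for each s let m_s ∈ ℤ be a global maximum of |φ_s|. Then the centers of localization are uniformly distributed: limsup_{L→∞} #{s : |m_s| ≤ L}/(2L+1) = liminf_{L→∞} #{s : |m_s| ≤ L}/(2L+1) = 1. -/

import Mathlib

noncomputable section

open Filter Real

def distToInt (x : ℝ) : ℝ := |x - round x|

def IsDiophantine (α : ℝ) : Prop :=
  ∃ κ τ : ℝ, 0 < κ ∧ 0 < τ ∧ ∀ k : ℤ, k ≠ 0 → τ / |(k : ℝ)| ^ κ ≤ distToInt (k * α)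

def deltaPhase (α θ : ℝ) : ℝ :=
  limsup (fun n : ℤ => -Real.log (distToInt (2 * θ + n * α)) / |(n : ℝ)|) cofinite

def amoPot (lam α θ : ℝ) : ℤ → ℝ := fun n => 2 * lam * Real.cos (2 * Real.pi * (θ + n * α))

def IsEigenfunction (g : ℤ → ℝ) (E : ℝ) (φ : ℤ → ℝ) : Prop :=
  ∀ n : ℤ, φ (n + 1) + φ (n - 1) + g n * φ n = E * φ n

def deltaPot (g : ℤ → ℝ) : ℝ :=
  limsup (fun n : ℤ => -Real.log (⨆ m : ℤ, |g (n - m) - g m|) / |(n : ℝ)|) cofinite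

def matNorm (M : Matrix (Fin 2) (Fin 2) ℝ) : ℝ := ⨆ p : Fin 2 × Fin 2, |M p.1 p.2|

def transfer (g : ℤ → ℝ) (E : ℝ) : ℕ → ℤ → Matrix (Fin 2) (Fin 2) ℝ
  | 0, _ => 1
  | n + 1, k => !![E - g (k + n), -1; 1, 0] * transfer g E n k

def LyapSup (g : ℤ → ℝ) (E : ℝ) : ℝ :=
  limsup (fun n : ℕ => ⨆ k : ℤ, Real.log (matNorm (transfer g E n k)) / n) atTop

def HasSULE (g : ℤ → ℝ) : Prop :=
  ∃ (Φ : HilbertBasis ℕ ℝ (lp (fun _ : ℤ => ℝ) 2)) (ns : ℕ → ℤ) (γ : ℝ),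
    0 < γ ∧
    (∀ s : ℕ, ∃ E : ℝ, IsEigenfunction g E (fun n => Φ s n)) ∧
    ∀ ε : ℝ, 0 < ε → ∃ C : ℝ,
      ∀ (s : ℕ) (n : ℤ),
        |Φ s n| ≤ C * Real.exp (ε * |(ns s : ℝ)|) * Real.exp (-γ * |(n : ℝ) - (ns s : ℝ)|)

/-!
The matrix `|φ s x|²` is doubly stochastic: its rows sum to `1` since the `φ s` are normalized, and
its columns sum to `1` by completeness (Parseval). Normalization keeps `|φ s (m s)|` from decaying
exponentially in the center of `φ s`, so `m s` lies close to that center and can replace it in the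
SULE bound. All but a finite total amount of mass then sits at sites `x` with `|x - m s| < δ |m s|`.
Comparing row and column sums, the number of maxima in `[-L, L]` lies, up to this finite error,
between the numbers of sites in `[-(1 - δ) L, (1 - δ) L]` and in `[-(1 + δ) L, (1 + δ) L]`.
-/

open scoped ENNReal NNReal Topology Asymptotics

section Counting

variable {ι X : Type*}

lemma tsum_indicator_one_eq_encard (S : Set ι) :
    ∑' i, S.indicator (1 : ι → ℝ≥0∞) i = S.encard := by
  rw [← tsum_subtype]
  exact ENNReal.tsum_set_one S

lemma encard_le_encard_add_tsum {a e : ι → X → ℝ≥0∞} {S : Set ι} {T : Set X}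
    (hrow : ∀ s ∈ S, 1 ≤ ∑' x, a s x) (hcol : ∀ x ∈ T, ∑' s, a s x ≤ 1)
    (he : ∀ s ∈ S, ∀ x ∉ T, a s x ≤ e s x) :
    (S.encard : ℝ≥0∞) ≤ T.encard + ∑' s, ∑' x, e s x := by
  have hle_row (s : ι) : S.indicator 1 s ≤ ∑' x, S.indicator 1 s * a s x := by
    by_cases hs : s ∈ S
    · simpa [hs] using hrow s hs
    · simp [hs]
  have hle_col (x : X) : ∑' s, T.indicator 1 x * a s x ≤ T.indicator 1 x := by
    by_cases hx : x ∈ T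
    · simpa [hx] using hcol x hx
    · simp [hx]
  have hpointwise (s : ι) (x : X) :
      S.indicator 1 s * a s x ≤ T.indicator 1 x * a s x + e s x := by
    by_cases hs : s ∈ S <;> by_cases hx : x ∈ T <;> simp [hs, hx, he]
  calc (S.encard : ℝ≥0∞)
      = ∑' s, S.indicator 1 s := (tsum_indicator_one_eq_encard S).symm
    _ ≤ ∑' s, ∑' x, S.indicator 1 s * a s x := ENNReal.tsum_le_tsum hle_row
    _ ≤ ∑' s, ∑' x, (T.indicator 1 x * a s x + e s x) :=
        ENNReal.tsum_le_tsum fun s => ENNReal.tsum_le_tsum (hpointwise s)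
    _ = ∑' x, ∑' s, T.indicator 1 x * a s x + ∑' s, ∑' x, e s x := by
        simp only [ENNReal.tsum_add]
        rw [ENNReal.tsum_comm]
    _ ≤ ∑' x, T.indicator 1 x + ∑' s, ∑' x, e s x := by gcongr with x; exact hle_col x
    _ = T.encard + ∑' s, ∑' x, e s x := by rw [tsum_indicator_one_eq_encard]

variable [PseudoMetricSpace X]

/-- The total mass that the rows of the matrix `a` put outside the balls around the points `m s`
whose radius is the fraction `δ` of the distance from `m s` to the origin `o`. -/
def massAway (a : ι → X → ℝ≥0∞) (m : ι → X) (o : X) (δ : ℝ) : ℝ≥0∞ :=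
  ∑' s, ∑' x, {x | δ * dist (m s) o ≤ dist x (m s)}.indicator (a s) x

variable {a : ι → X → ℝ≥0∞} {m : ι → X} {o : X} {δ : ℝ}

lemma encard_centers_le_encard_closedBall_add_massAway (hrow : ∀ s, 1 ≤ ∑' x, a s x)
    (hcol : ∀ x, ∑' s, a s x ≤ 1) (hδ : 0 ≤ δ) (R : ℝ) :
    ({s | dist (m s) o ≤ R}.encard : ℝ≥0∞) ≤
      (Metric.closedBall o ((1 + δ) * R)).encard + massAway a m o δ := by
  refine encard_le_encard_add_tsum (fun s _ => hrow s) (fun x _ => hcol x) fun s hs x hx => ?_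
  have hfar : δ * dist (m s) o ≤ dist x (m s) := by
    rw [Metric.mem_closedBall, not_le] at hx
    have hs : dist (m s) o ≤ R := hs
    nlinarith [dist_triangle x (m s) o]
  exact (Set.indicator_of_mem (s := {x | δ * dist (m s) o ≤ dist x (m s)}) hfar (a s)).ge

lemma encard_closedBall_le_encard_centers_add_massAway (hrow : ∀ s, ∑' x, a s x ≤ 1)
    (hcol : ∀ x, 1 ≤ ∑' s, a s x) (hδ : δ ≤ 1) (R : ℝ) :
    ((Metric.closedBall o ((1 - δ) * R)).encard : ℝ≥0∞) ≤
      {s | dist (m s) o ≤ R}.encard + massAway a m o δ := by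
  rw [massAway, ENNReal.tsum_comm]
  refine encard_le_encard_add_tsum (a := fun x s => a s x) (fun x _ => hcol x)
    (fun s _ => hrow s) fun x hx s hs => ?_
  have hfar : δ * dist (m s) o ≤ dist x (m s) := by
    rw [Metric.mem_closedBall] at hx
    have hs : R < dist (m s) o := not_le.mp hs
    nlinarith [dist_triangle_left (m s) o x]
  exact (Set.indicator_of_mem (s := {x | δ * dist (m s) o ≤ dist x (m s)}) hfar (a s)).ge

end Counting

section Localization

variable {ι X E : Type*} [PseudoMetricSpace X] [SeminormedAddCommGroup E]

/-- Subexponential volume growth of a discrete space, uniformly in the base point, expressed as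
summability of every exponential weight. Since the sum is taken in `ℝ≥0∞`, no separate
summability condition is needed. -/
def SubexponentialGrowth (X : Type*) [PseudoMetricSpace X] : Prop :=
  ∀ c : ℝ, 0 < c → ∃ K : ℝ≥0, ∀ y : X, ∑' x, ENNReal.ofReal (exp (-c * dist x y)) ≤ K

/-- The SULE condition: `φ s` decays exponentially at rate `γ` around the center `c s`, with a
prefactor growing slower than every exponential in the distance from `c s` to the origin `o`. -/
def SemiUniformlyLocalized (φ : ι → X → E) (o : X) (c : ι → X) (γ : ℝ) : Prop :=
  ∀ ε : ℝ, 0 < ε → ∃ C : ℝ, ∀ s x,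
    ‖φ s x‖ ≤ C * exp (ε * dist (c s) o) * exp (-γ * dist x (c s))

lemma ofReal_norm_sq_eq_enorm_sq (v : E) : ENNReal.ofReal (‖v‖ ^ 2) = ‖v‖ₑ ^ 2 := by
  rw [ENNReal.ofReal_pow (norm_nonneg v), ofReal_norm]

namespace SemiUniformlyLocalized

variable {φ : ι → X → E} {o : X} {c m : ι → X} {γ ε δ : ℝ}

lemma exists_nonneg (h : SemiUniformlyLocalized φ o c γ) (hε : 0 < ε) :
    ∃ C : ℝ, 0 ≤ C ∧ ∀ s x,
      ‖φ s x‖ ≤ C * exp (ε * dist (c s) o) * exp (-γ * dist x (c s)) := by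
  obtain ⟨C, hC⟩ := h ε hε
  refine ⟨max C 0, le_max_right _ _, fun s x => (hC s x).trans ?_⟩
  gcongr
  exact le_max_left _ _

-- Row normalization gives `1 = ∑ₓ ‖φ s x‖² ≤ ‖φ s (m s)‖ ∑ₓ ‖φ s x‖`, and the last sum is
-- controlled by the exponential decay.
lemma exists_one_le_mul_norm_maximum (h : SemiUniformlyLocalized φ o c γ)
    (hX : SubexponentialGrowth X) (hγ : 0 < γ) (hrow : ∀ s, 1 ≤ ∑' x, ‖φ s x‖ₑ ^ 2)
    (hmax : ∀ s x, ‖φ s x‖ ≤ ‖φ s (m s)‖) (hε : 0 < ε) :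
    ∃ A : ℝ, 0 ≤ A ∧ ∀ s, 1 ≤ A * exp (ε * dist (c s) o) * ‖φ s (m s)‖ := by
  obtain ⟨C, hC₀, hC⟩ := h.exists_nonneg hε
  obtain ⟨K, hK⟩ := hX γ hγ
  refine ⟨C * K, by positivity, fun s => ?_⟩
  set B := C * exp (ε * dist (c s) o) * ‖φ s (m s)‖
  have hB₀ : 0 ≤ B := by positivity
  have hsq (x : X) : ‖φ s x‖ ^ 2 ≤ B * exp (-γ * dist x (c s)) := by
    calc ‖φ s x‖ ^ 2 = ‖φ s x‖ * ‖φ s x‖ := sq _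
      _ ≤ C * exp (ε * dist (c s) o) * exp (-γ * dist x (c s)) * ‖φ s (m s)‖ :=
          mul_le_mul (hC s x) (hmax s x) (norm_nonneg _) (by positivity)
      _ = B * exp (-γ * dist x (c s)) := by ring
  have hone : 1 ≤ ENNReal.ofReal (B * K) := by
    calc (1 : ℝ≥0∞) ≤ ∑' x, ‖φ s x‖ₑ ^ 2 := hrow s
      _ ≤ ∑' x, ENNReal.ofReal B * ENNReal.ofReal (exp (-γ * dist x (c s))) := by
          refine ENNReal.tsum_le_tsum fun x => ?_
          rw [← ofReal_norm_sq_eq_enorm_sq, ← ENNReal.ofReal_mul hB₀]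
          exact ENNReal.ofReal_le_ofReal (hsq x)
      _ ≤ ENNReal.ofReal B * K := by rw [ENNReal.tsum_mul_left]; gcongr; exact hK (c s)
      _ = ENNReal.ofReal (B * K) := by
          rw [ENNReal.ofReal_mul hB₀, ENNReal.ofReal_coe_nnreal]
  calc 1 ≤ B * K := ENNReal.one_le_ofReal.mp hone
    _ = C * K * exp (ε * dist (c s) o) * ‖φ s (m s)‖ := by ring

lemma exists_mul_dist_maximum_le (h : SemiUniformlyLocalized φ o c γ)
    (hX : SubexponentialGrowth X) (hγ : 0 < γ) (hrow : ∀ s, 1 ≤ ∑' x, ‖φ s x‖ₑ ^ 2)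
    (hmax : ∀ s x, ‖φ s x‖ ≤ ‖φ s (m s)‖) (hε : 0 < ε) :
    ∃ B : ℝ, ∀ s, γ * dist (m s) (c s) ≤ ε * dist (c s) o + B := by
  obtain ⟨C, hC⟩ := h (ε / 2) (half_pos hε)
  obtain ⟨A, hA₀, hA⟩ := h.exists_one_le_mul_norm_maximum hX hγ hrow hmax (half_pos hε)
  refine ⟨log (A * C), fun s => ?_⟩
  set t := ε * dist (c s) o - γ * dist (m s) (c s) with ht
  have hone : 1 ≤ A * C * exp t := by
    calc 1 ≤ A * exp (ε / 2 * dist (c s) o) * ‖φ s (m s)‖ := hA s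
      _ ≤ A * exp (ε / 2 * dist (c s) o) *
            (C * exp (ε / 2 * dist (c s) o) * exp (-γ * dist (m s) (c s))) := by
          gcongr; exact hC s (m s)
      _ = A * C * exp (ε / 2 * dist (c s) o + ε / 2 * dist (c s) o + -γ * dist (m s) (c s)) := by
          simp only [exp_add]; ring
      _ = A * C * exp t := by rw [ht]; ring_nf
  have hAC : exp (-t) ≤ A * C := by rwa [exp_neg, inv_le_iff_one_le_mul₀ (exp_pos t)]
  have hlog : -t ≤ log (A * C) := (le_log_iff_exp_le ((exp_pos _).trans_le hAC)).mpr hAC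
  linarith

lemma recenter (h : SemiUniformlyLocalized φ o c γ) (hX : SubexponentialGrowth X) (hγ : 0 < γ)
    (hrow : ∀ s, 1 ≤ ∑' x, ‖φ s x‖ₑ ^ 2) (hmax : ∀ s x, ‖φ s x‖ ≤ ‖φ s (m s)‖) :
    SemiUniformlyLocalized φ o m γ := by
  intro η hη
  obtain ⟨B₁, hB₁⟩ := h.exists_mul_dist_maximum_le hX hγ hrow hmax (half_pos hγ)
  obtain ⟨B₂, hB₂⟩ := h.exists_mul_dist_maximum_le hX hγ hrow hmax (ε := η / 4) (by positivity)
  obtain ⟨C, hC₀, hC⟩ := h.exists_nonneg (ε := η / 4) (by positivity)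
  have hcm (s : ι) : dist (c s) o ≤ 2 * dist (m s) o + 2 * B₁ / γ := by
    have htri := mul_le_mul_of_nonneg_left (dist_triangle_left (c s) o (m s)) hγ.le
    rw [← sub_le_iff_le_add', le_div_iff₀ hγ]
    linarith [hB₁ s]
  refine ⟨C * exp (η * B₁ / γ + B₂), fun s x => ?_⟩
  have hexp : η / 4 * dist (c s) o + -γ * dist x (c s) ≤
      η * B₁ / γ + B₂ + η * dist (m s) o + -γ * dist x (m s) := by
    have htri := mul_le_mul_of_nonneg_left (dist_triangle_right x (m s) (c s)) hγ.le
    have hscaled := mul_le_mul_of_nonneg_left (hcm s) (half_pos hη).le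
    have hring : η / 2 * (2 * B₁ / γ) = η * B₁ / γ := by ring
    linarith [hB₂ s]
  calc ‖φ s x‖ ≤ C * exp (η / 4 * dist (c s) o) * exp (-γ * dist x (c s)) := hC s x
    _ = C * exp (η / 4 * dist (c s) o + -γ * dist x (c s)) := by rw [exp_add, mul_assoc]
    _ ≤ C * exp (η * B₁ / γ + B₂ + η * dist (m s) o + -γ * dist x (m s)) := by gcongr
    _ = C * exp (η * B₁ / γ + B₂) * exp (η * dist (m s) o) * exp (-γ * dist x (m s)) := by
        simp only [exp_add, mul_assoc]

-- Each term is at most a subexponential multiple of the mass of row `s` at the single site `m s`,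
-- so summing over `s` first bounds everything by column sums.
lemma tsum_exp_dist_maximum_ne_top (h : SemiUniformlyLocalized φ o m γ)
    (hX : SubexponentialGrowth X) (hγ : 0 < γ) (hrow : ∀ s, 1 ≤ ∑' x, ‖φ s x‖ₑ ^ 2)
    (hcol : ∀ x, ∑' s, ‖φ s x‖ₑ ^ 2 ≤ 1) (hmax : ∀ s x, ‖φ s x‖ ≤ ‖φ s (m s)‖) (hε : 0 < ε) :
    ∑' s, ENNReal.ofReal (exp (-ε * dist (m s) o)) ≠ ∞ := by
  obtain ⟨A, -, hA⟩ := h.exists_one_le_mul_norm_maximum hX hγ hrow hmax (ε := ε / 4) (by positivity)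
  obtain ⟨K, hK⟩ := hX (ε / 2) (half_pos hε)
  let w (x : X) : ℝ≥0∞ := ENNReal.ofReal (exp (-(ε / 2) * dist x o))
  have hreal (s : ι) : exp (-ε * dist (m s) o) ≤
      A ^ 2 * (exp (-(ε / 2) * dist (m s) o) * ‖φ s (m s)‖ ^ 2) := by
    calc exp (-ε * dist (m s) o)
        ≤ exp (-ε * dist (m s) o) * (A * exp (ε / 4 * dist (m s) o) * ‖φ s (m s)‖) ^ 2 :=
          le_mul_of_one_le_right (exp_pos _).le (one_le_pow₀ (hA s))
      _ = A ^ 2 * (exp (-ε * dist (m s) o + (ε / 4 * dist (m s) o + ε / 4 * dist (m s) o)) *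
            ‖φ s (m s)‖ ^ 2) := by simp only [exp_add]; ring
      _ = A ^ 2 * (exp (-(ε / 2) * dist (m s) o) * ‖φ s (m s)‖ ^ 2) := by ring_nf
  have hterm (s : ι) : ENNReal.ofReal (exp (-ε * dist (m s) o)) ≤
      ENNReal.ofReal (A ^ 2) * ∑' x, w x * ‖φ s x‖ₑ ^ 2 := by
    calc ENNReal.ofReal (exp (-ε * dist (m s) o))
        ≤ ENNReal.ofReal (A ^ 2) * (w (m s) * ‖φ s (m s)‖ₑ ^ 2) := by
          rw [← ofReal_norm_sq_eq_enorm_sq, ← ENNReal.ofReal_mul (by positivity),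
            ← ENNReal.ofReal_mul (by positivity)]
          exact ENNReal.ofReal_le_ofReal (hreal s)
      _ ≤ ENNReal.ofReal (A ^ 2) * ∑' x, w x * ‖φ s x‖ₑ ^ 2 := by
          gcongr; exact ENNReal.le_tsum (f := fun x => w x * ‖φ s x‖ₑ ^ 2) (m s)
  refine ne_top_of_le_ne_top (b := ENNReal.ofReal (A ^ 2) * K) (by finiteness) ?_
  calc ∑' s, ENNReal.ofReal (exp (-ε * dist (m s) o))
      ≤ ∑' s, ENNReal.ofReal (A ^ 2) * ∑' x, w x * ‖φ s x‖ₑ ^ 2 := ENNReal.tsum_le_tsum hterm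
    _ = ENNReal.ofReal (A ^ 2) * ∑' x, w x * ∑' s, ‖φ s x‖ₑ ^ 2 := by
        rw [ENNReal.tsum_mul_left, ENNReal.tsum_comm]
        simp only [ENNReal.tsum_mul_left]
    _ ≤ ENNReal.ofReal (A ^ 2) * ∑' x, w x := by
        gcongr with x; exact mul_le_of_le_one_right' (hcol x)
    _ ≤ ENNReal.ofReal (A ^ 2) * K := by gcongr; exact hK o

lemma exists_enorm_sq_le_of_le_dist (h : SemiUniformlyLocalized φ o m γ) (hγ : 0 < γ)
    (hδ : 0 < δ) :
    ∃ A : ℝ≥0, ∀ s x, δ * dist (m s) o ≤ dist x (m s) → ‖φ s x‖ₑ ^ 2 ≤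
      A * (ENNReal.ofReal (exp (-(γ * δ / 2) * dist (m s) o)) *
        ENNReal.ofReal (exp (-γ * dist x (m s)))) := by
  obtain ⟨C, hC⟩ := h (γ * δ / 4) (by positivity)
  refine ⟨(C ^ 2).toNNReal, fun s x hx => ?_⟩
  have hscaled := mul_le_mul_of_nonneg_left hx hγ.le
  have hsq : ‖φ s x‖ ^ 2 ≤
      C ^ 2 * (exp (-(γ * δ / 2) * dist (m s) o) * exp (-γ * dist x (m s))) := by
    calc ‖φ s x‖ ^ 2
        ≤ (C * exp (γ * δ / 4 * dist (m s) o) * exp (-γ * dist x (m s))) ^ 2 := by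
          gcongr; exact hC s x
      _ = C ^ 2 * exp (2 * (γ * δ / 4 * dist (m s) o) + 2 * (-γ * dist x (m s))) := by
          rw [exp_add, two_mul, two_mul, exp_add, exp_add]; ring
      _ ≤ C ^ 2 * exp (-(γ * δ / 2) * dist (m s) o + -γ * dist x (m s)) :=
          mul_le_mul_of_nonneg_left (exp_le_exp.mpr (by linarith)) (sq_nonneg C)
      _ = C ^ 2 * (exp (-(γ * δ / 2) * dist (m s) o) * exp (-γ * dist x (m s))) := by
          rw [exp_add]
  rw [← ofReal_norm_sq_eq_enorm_sq, ← ENNReal.ofReal_mul (by positivity)]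
  change _ ≤ ENNReal.ofReal (C ^ 2) * _
  rw [← ENNReal.ofReal_mul (sq_nonneg C)]
  exact ENNReal.ofReal_le_ofReal hsq

lemma massAway_ne_top (h : SemiUniformlyLocalized φ o m γ) (hX : SubexponentialGrowth X)
    (hγ : 0 < γ) (hrow : ∀ s, 1 ≤ ∑' x, ‖φ s x‖ₑ ^ 2) (hcol : ∀ x, ∑' s, ‖φ s x‖ₑ ^ 2 ≤ 1)
    (hmax : ∀ s x, ‖φ s x‖ ≤ ‖φ s (m s)‖) (hδ : 0 < δ) :
    massAway (fun s x => ‖φ s x‖ₑ ^ 2) m o δ ≠ ∞ := by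
  obtain ⟨A, hA⟩ := h.exists_enorm_sq_le_of_le_dist hγ hδ
  obtain ⟨K, hK⟩ := hX γ hγ
  let w (s : ι) : ℝ≥0∞ := ENNReal.ofReal (exp (-(γ * δ / 2) * dist (m s) o))
  have hw : ∑' s, w s ≠ ∞ :=
    h.tsum_exp_dist_maximum_ne_top hX hγ hrow hcol hmax (ε := γ * δ / 2) (by positivity)
  refine ne_top_of_le_ne_top (b := A * ((∑' s, w s) * K)) (by finiteness) ?_
  calc massAway (fun s x => ‖φ s x‖ₑ ^ 2) m o δ
      ≤ ∑' s, ∑' x, A * (w s * ENNReal.ofReal (exp (-γ * dist x (m s)))) :=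
        ENNReal.tsum_le_tsum fun s => ENNReal.tsum_le_tsum fun x =>
          Set.indicator_apply_le' (hA s x) fun _ => zero_le
    _ = A * ∑' s, w s * ∑' x, ENNReal.ofReal (exp (-γ * dist x (m s))) := by
        simp only [ENNReal.tsum_mul_left]
    _ ≤ A * ∑' s, w s * K := by gcongr with s; exact hK (m s)
    _ = A * ((∑' s, w s) * K) := by rw [ENNReal.tsum_mul_right]

end SemiUniformlyLocalized

end Localization

section HilbertBasis

variable {ι X 𝕜 : Type*} [RCLike 𝕜]

lemma tsum_enorm_sq_lp (f : lp (fun _ : X => 𝕜) 2) : ∑' x, ‖f x‖ₑ ^ 2 = ‖f‖ₑ ^ 2 := by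
  have hsum : HasSum (fun x => ‖f x‖ ^ 2) (‖f‖ ^ 2) := by
    simpa using lp.hasSum_norm (p := 2) (by simp) f
  simp only [← ofReal_norm_sq_eq_enorm_sq]
  rw [← hsum.tsum_eq, ENNReal.ofReal_tsum_of_nonneg (fun x => sq_nonneg _) hsum.summable]

variable (Φ : HilbertBasis ι 𝕜 (lp (fun _ : X => 𝕜) 2))

lemma tsum_enorm_sq_hilbertBasis_row (s : ι) : ∑' x, ‖Φ s x‖ₑ ^ 2 = 1 := by
  rw [tsum_enorm_sq_lp, ← ofReal_norm_sq_eq_enorm_sq, Φ.orthonormal.norm_eq_one s]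
  simp

lemma tsum_enorm_sq_hilbertBasis_col (x : X) : ∑' s, ‖Φ s x‖ₑ ^ 2 = 1 := by
  classical
  have hcoeff (s : ι) : ‖Φ s x‖ₑ = ‖Φ.repr (lp.single 2 x 1) s‖ₑ := by
    rw [Φ.repr_apply_apply, lp.inner_single_right]
    simp [enorm_eq_nnnorm]
  simp only [hcoeff, tsum_enorm_sq_lp]
  rw [← ofReal_norm_sq_eq_enorm_sq, Φ.repr.norm_map, lp.norm_single (by simp)]
  simp

end HilbertBasis

section IntegerLattice

lemma summable_exp_neg_mul_abs_int {c : ℝ} (hc : 0 < c) :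
    Summable fun n : ℤ => exp (-c * |(n : ℝ)|) := by
  have hnat : Summable fun n : ℕ => exp (-c * n) := by
    simpa only [mul_comm] using summable_exp_nat_mul_iff.mpr (neg_lt_zero.mpr hc)
  exact .of_nat_of_neg (by simpa using hnat) (by simpa using hnat)

lemma subexponentialGrowth_int : SubexponentialGrowth ℤ := by
  intro c hc
  refine ⟨(∑' n : ℤ, exp (-c * |(n : ℝ)|)).toNNReal, fun y => le_of_eq ?_⟩
  calc ∑' x : ℤ, ENNReal.ofReal (exp (-c * dist x y))
      = ∑' n : ℤ, ENNReal.ofReal (exp (-c * |(n : ℝ)|)) := by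
        simpa [Int.dist_eq] using
          (Equiv.subRight y).tsum_eq fun n : ℤ => ENNReal.ofReal (exp (-c * |(n : ℝ)|))
    _ = ENNReal.ofReal (∑' n : ℤ, exp (-c * |(n : ℝ)|)) :=
        (ENNReal.ofReal_tsum_of_nonneg (fun n => (exp_pos _).le)
          (summable_exp_neg_mul_abs_int hc)).symm

lemma encard_closedBall_int {r : ℝ} (hr : 0 ≤ r) :
    (Metric.closedBall (0 : ℤ) r).encard = (2 * ⌊r⌋₊ + 1 : ℕ) := by
  have hfloor : (0 : ℤ) ≤ ⌊r⌋ := Int.floor_nonneg.mpr hr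
  rw [Int.closedBall_eq_Icc, ← Finset.coe_Icc, Set.encard_coe_eq_coe_finsetCard, Int.card_Icc,
    Int.cast_zero, zero_sub, zero_add, Int.ceil_neg, ← Int.floor_toNat]
  congr 1
  omega

lemma abs_ncard_centers_sub_le {ι : Type*} {a : ι → ℤ → ℝ≥0∞} {m : ι → ℤ} {δ : ℝ}
    (hrow : ∀ s, ∑' n, a s n = 1) (hcol : ∀ n, ∑' s, a s n = 1)
    (haway : massAway a m 0 δ ≠ ∞) (hδ₀ : 0 ≤ δ) (hδ₁ : δ ≤ 1) (L : ℕ) :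
    |({s | |m s| ≤ (L : ℤ)}.ncard : ℝ) - (2 * L + 1)| ≤
      2 * δ * L + 2 + (massAway a m 0 δ).toReal := by
  have hset : {s | |m s| ≤ (L : ℤ)} = {s | dist (m s) 0 ≤ (L : ℝ)} := by
    ext s
    simp only [Set.mem_ofPred_eq, Int.dist_eq', sub_zero]
    norm_cast
  have hupper := encard_centers_le_encard_closedBall_add_massAway (m := m) (o := 0)
    (fun s => (hrow s).ge) (fun n => (hcol n).le) hδ₀ L
  have hlower := encard_closedBall_le_encard_centers_add_massAway (m := m) (o := 0)
    (fun s => (hrow s).le) (fun n => (hcol n).ge) hδ₁ L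
  have hin : 0 ≤ (1 - δ) * L := mul_nonneg (sub_nonneg.mpr hδ₁) L.cast_nonneg
  rw [← hset, encard_closedBall_int (by positivity), ENat.toENNReal_coe] at hupper
  rw [← hset, encard_closedBall_int hin, ENat.toENNReal_coe] at hlower
  lift massAway a m 0 δ to ℝ≥0 using haway with M
  have hfin : {s | |m s| ≤ (L : ℤ)}.Finite := by
    rw [← Set.encard_ne_top_iff, ← ENat.toENNReal_ne_top]
    exact ne_top_of_le_ne_top (by finiteness) hupper
  rw [← hfin.cast_ncard_eq, ENat.toENNReal_coe] at hupper hlower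
  have hupper' : ({s | |m s| ≤ (L : ℤ)}.ncard : ℝ) ≤ 2 * ⌊(1 + δ) * L⌋₊ + 1 + M := by
    exact_mod_cast hupper
  have hlower' : (2 * ⌊(1 - δ) * L⌋₊ + 1 : ℝ) ≤ {s | |m s| ≤ (L : ℤ)}.ncard + M := by
    exact_mod_cast hlower
  have hfloor_out : (⌊(1 + δ) * L⌋₊ : ℝ) ≤ (1 + δ) * L := Nat.floor_le (by positivity)
  have hfloor_in : (1 - δ) * L < ⌊(1 - δ) * L⌋₊ + 1 := Nat.lt_floor_add_one _
  rw [ENNReal.coe_toReal, abs_le]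
  constructor <;> linarith

end IntegerLattice

lemma isEquivalent_of_forall_abs_sub_le {α : Type*} {l : Filter α} {u v : α → ℝ}
    (hv : Tendsto v l atTop)
    (h : ∀ δ : ℝ, 0 < δ → δ ≤ 1 → ∃ B : ℝ, ∀ᶠ x in l, |u x - v x| ≤ δ * v x + B) : u ~[l] v := by
  refine Asymptotics.isLittleO_iff.mpr fun r hr => ?_
  obtain ⟨B, hB⟩ := h (min (r / 2) 1) (lt_min (half_pos hr) one_pos) (min_le_right _ _)
  have hBv := (hv.const_mul_atTop (half_pos hr)).eventually_ge_atTop B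
  filter_upwards [hB, hv.eventually_ge_atTop 0, hBv] with x hx hv₀ hBx
  have hδv := mul_le_mul_of_nonneg_right (min_le_left (r / 2) 1) hv₀
  simp only [Pi.sub_apply, norm_eq_abs, abs_of_nonneg hv₀]
  linarith

theorem SULE_uniform_density_of_centers_general {ι 𝕜 : Type*} [RCLike 𝕜]
    (Φ : HilbertBasis ι 𝕜 (lp (fun _ : ℤ => 𝕜) 2)) {c m : ι → ℤ} {γ : ℝ} (hγ : 0 < γ)
    (hloc : SemiUniformlyLocalized (fun s n => Φ s n) 0 c γ)
    (hmax : ∀ s n, ‖Φ s n‖ ≤ ‖Φ s (m s)‖) :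
    Tendsto (fun L : ℕ => ({s | |m s| ≤ (L : ℤ)}.ncard : ℝ) / (2 * L + 1)) atTop (𝓝 1) := by
  have hrow := tsum_enorm_sq_hilbertBasis_row Φ
  have hcol := tsum_enorm_sq_hilbertBasis_col Φ
  have hX := subexponentialGrowth_int
  have hcentered : SemiUniformlyLocalized (fun s n => Φ s n) 0 m γ :=
    hloc.recenter hX hγ (fun s => (hrow s).ge) hmax
  have hvolume : Tendsto (fun L : ℕ => (2 * L + 1 : ℝ)) atTop atTop :=
    tendsto_atTop_add_const_right _ _ (tendsto_natCast_atTop_atTop.const_mul_atTop two_pos)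
  refine (Asymptotics.isEquivalent_iff_tendsto_one (.of_forall fun L => by positivity)).mp ?_
  refine isEquivalent_of_forall_abs_sub_le hvolume fun δ hδ₀ hδ₁ => ?_
  have haway := hcentered.massAway_ne_top hX hγ (fun s => (hrow s).ge) (fun n => (hcol n).le)
    hmax hδ₀
  refine ⟨2 + (massAway (fun s n => ‖Φ s n‖ₑ ^ 2) m 0 δ).toReal, .of_forall fun L => ?_⟩
  have hbound := abs_ncard_centers_sub_le hrow hcol haway hδ₀.le hδ₁ L
  linarith

theorem SULE_uniform_density_of_centers
    (H : lp (fun _ : ℤ => ℝ) 2 →L[ℝ] lp (fun _ : ℤ => ℝ) 2)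
    (hsa : IsSelfAdjoint H)
    (Φ : HilbertBasis ℕ ℝ (lp (fun _ : ℤ => ℝ) 2)) (ns : ℕ → ℤ) (γ : ℝ)
    (hγ : 0 < γ)
    (heig : ∀ s : ℕ, ∃ E : ℝ, H (Φ s) = E • (Φ s : lp (fun _ : ℤ => ℝ) 2))
    (hSULE : ∀ ε : ℝ, 0 < ε → ∃ C : ℝ, ∀ (s : ℕ) (n : ℤ),
      |Φ s n| ≤ C * Real.exp (ε * |(ns s : ℝ)|) * Real.exp (-γ * |(n : ℝ) - (ns s : ℝ)|))
    (m : ℕ → ℤ) (hm : ∀ (s : ℕ) (n : ℤ), |Φ s n| ≤ |Φ s (m s)|) :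
    limsup (fun L : ℕ => (Set.ncard {s : ℕ | |m s| ≤ (L : ℤ)} : ℝ) / (2 * L + 1)) atTop = 1 ∧
    liminf (fun L : ℕ => (Set.ncard {s : ℕ | |m s| ≤ (L : ℤ)} : ℝ) / (2 * L + 1)) atTop = 1 := by
  have hdensity := SULE_uniform_density_of_centers_general Φ hγ (c := ns) (m := m)
    (by simpa [SemiUniformlyLocalized, Int.dist_eq, Int.norm_eq_abs] using hSULE) hm
  exact ⟨hdensity.limsup_eq, hdensity.liminf_eq⟩
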